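/- Adopt the MDP data with Lipschitz assumptions and Diff₂, and let μ_true be a second Borel probability measure on W. For bounded measurable v : X → ℝ define the true Bellman operator (Φ_true v)(x) = inf_{a ∈ A} ∫_W (c(x,a,z) + α v(F(x,a,z))) μ_true(dz) with iterates Φ_true,t, and Q_true,{t,v}(x,a) = ∫_W (c(x,a,z) + α (Φ_true,{t−1} v)(F(x,a,z))) μ_true(dz). Then for every bounded L_v-Lipschitz v : X → ℝ and every t ≥ 1: |Q_true,{t,v}(x,a) − Q_{t,v}(x,a)| ≤ Diff₂(t,v) · β(μ_true, μ) for all (x,a) ∈ X × A, and |(Φ_true,t v)(x) − (Φ_t v)(x)| ≤ Diff₂(t,v) · β(μ_true, μ) for all x ∈ X. (Lemma C.6.) -/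

import Mathlib

/-!
Write `ℓ_s` and `M_s` for a Lipschitz constant and a sup bound of `Φ_s v`. One Bellman step maps a
function with constants `(M, ℓ)` to one with constants `(Mc + α M, Lc + α LF ℓ)`, so
`M_s = Mc ∑_{k<s} α^k + α^s Mv` and `ℓ_s = Lc ∑_{k<s} (α LF)^k + (α LF)^s Lv`.

The integrand `z ↦ c(x,a,z) + α (Φ_s v)(F(x,a,z))` is therefore bounded by `Mc + α M_s` and
Lipschitz with constant `Lc + α LF ℓ_s`, so replacing `μ` by `μ_true` in its integral costs at
most the sum of these two constants times `β(μ_true, μ)`, by `abs_integral_sub_le_betaDist`.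
Replacing the iterate `Φ_s v` by `Φ_true,s v` costs `α` times the error of step `s`, and an infimum
over actions is nonexpansive in the sup norm. Hence the error is at most `D_t β(μ_true, μ)` with
`D_0 = 0` and `D_{s+1} = (Mc + α M_s) + (Lc + α LF ℓ_s) + α D_s`. Unrolling this recursion gives
exactly `Diff₂(t,v)` for `t ≥ 1` (`errBound_eq_Diff2`).
-/

open MeasureTheory Filter Topology
open scoped ENNReal NNReal

noncomputable section

/-- The condition `‖f‖_L + ‖f‖_∞ ≤ 1` on a function `f : W → ℝ`. -/
def BLle1 {W : Type*} [PseudoMetricSpace W] (f : W → ℝ) : Prop :=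
  ∃ L C : ℝ, 0 ≤ L ∧ 0 ≤ C ∧ L + C ≤ 1 ∧
    (∀ x y, |f x - f y| ≤ L * dist x y) ∧ ∀ x, |f x| ≤ C

/-- The bounded Lipschitz metric. -/
def betaDist {W : Type*} [PseudoMetricSpace W] [MeasurableSpace W]
    (μ ν : Measure W) : ℝ :=
  sSup {r : ℝ | ∃ f : W → ℝ, Measurable f ∧ BLle1 f ∧
    r = |∫ z, f z ∂μ - ∫ z, f z ∂ν|}

/-- The quantity `Diff₂(t,v)` of Lemma C.5/C.6, where `Mc` bounds `‖c‖_∞`, `Mv` bounds `‖v‖_∞`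
and `Lv` is a Lipschitz constant of `v`. -/
def Diff2 (α Lc LF Mc Mv Lv : ℝ) (t : ℕ) : ℝ :=
  (Mc + Lc) * ∑ k ∈ Finset.range t, α ^ k
    + α ^ t * (Mv + Lv * LF)
    + Mc * ∑ j ∈ Finset.Icc 1 (t - 1), α ^ j * ∑ k ∈ Finset.range (t - j), α ^ k
    + ((t : ℝ) - 1) * α ^ t * Mv
    + α * Lc * LF * ∑ j ∈ Finset.Icc 1 t, α ^ (j - 1) * ∑ k ∈ Finset.range (t - j), (α * LF) ^ k
    + α * Lv * LF * ∑ j ∈ Finset.Icc 1 (t - 1), (α * LF) ^ j * α ^ (t - j - 1)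

/-- The Bellman operator `(Φ v)(x) = inf_{a ∈ A} ∫ (c(x,a,z) + α v(F(x,a,z))) μ(dz)`. -/
def bellmanPhi {X 𝔸 W : Type*} [MeasurableSpace W]
    (F : X → 𝔸 → W → X) (c : X → 𝔸 → W → ℝ) (α : ℝ) (μ : Measure W)
    (v : X → ℝ) (x : X) : ℝ :=
  ⨅ a : 𝔸, ∫ z, (c x a z + α * v (F x a z)) ∂μ

/-- The Q-operator `Q_{t,v}(x,a) = ∫ (c(x,a,z) + α (Φ_{t−1} v)(F(x,a,z))) μ(dz)`. -/
def Qop {X 𝔸 W : Type*} [MeasurableSpace W]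
    (F : X → 𝔸 → W → X) (c : X → 𝔸 → W → ℝ) (α : ℝ) (μ : Measure W)
    (t : ℕ) (v : X → ℝ) (x : X) (a : 𝔸) : ℝ :=
  ∫ z, (c x a z + α * ((bellmanPhi F c α μ)^[t - 1] v) (F x a z)) ∂μ

/-! ### Bounded Lipschitz functions and their integrals -/

lemma abs_integral_le_of_abs_le {W : Type*} [MeasurableSpace W] (μ : Measure W)
    [IsProbabilityMeasure μ] {f : W → ℝ} {C : ℝ} (h : ∀ z, |f z| ≤ C) : |∫ z, f z ∂μ| ≤ C := by
  simpa using norm_integral_le_of_norm_le_const (μ := μ) (f := f) (Eventually.of_forall h)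

/-- The supremum defining `betaDist` is over a bounded set, so it is not a junk value. -/
lemma bddAbove_betaDist {W : Type*} [PseudoMetricSpace W] [MeasurableSpace W]
    (μ ν : Measure W) [IsProbabilityMeasure μ] [IsProbabilityMeasure ν] :
    BddAbove {r : ℝ | ∃ f : W → ℝ, Measurable f ∧ BLle1 f ∧
      r = |∫ z, f z ∂μ - ∫ z, f z ∂ν|} := by
  refine ⟨2, ?_⟩
  rintro r ⟨f, -, ⟨L, C, hL, hC, hLC, -, hb⟩, rfl⟩
  have h1 : |∫ z, f z ∂μ| ≤ C := abs_integral_le_of_abs_le μ hb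
  have h2 : |∫ z, f z ∂ν| ≤ C := abs_integral_le_of_abs_le ν hb
  have := abs_sub (∫ z, f z ∂μ) (∫ z, f z ∂ν)
  linarith

lemma abs_integral_sub_le_betaDist {W : Type*} [PseudoMetricSpace W] [MeasurableSpace W]
    (μ ν : Measure W) [IsProbabilityMeasure μ] [IsProbabilityMeasure ν]
    {f : W → ℝ} (hf : Measurable f) {L C : ℝ} (hL : 0 ≤ L) (hC : 0 ≤ C)
    (hLip : ∀ x y, |f x - f y| ≤ L * dist x y) (hb : ∀ x, |f x| ≤ C) :
    |∫ z, f z ∂μ - ∫ z, f z ∂ν| ≤ (C + L) * betaDist μ ν := by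
  rcases (add_nonneg hC hL).eq_or_lt with h0 | hpos
  · have hf0 : ∀ x, f x = 0 := fun x => abs_nonpos_iff.1 ((hb x).trans (by linarith))
    simp [hf0, ← h0]
  · have hmem : |∫ z, (C + L)⁻¹ * f z ∂μ - ∫ z, (C + L)⁻¹ * f z ∂ν| ≤ betaDist μ ν := by
      refine le_csSup (bddAbove_betaDist μ ν) ⟨fun z => (C + L)⁻¹ * f z, hf.const_mul _,
        ⟨(C + L)⁻¹ * L, (C + L)⁻¹ * C, by positivity, by positivity, ?_, ?_, ?_⟩, rfl⟩
      · rw [← mul_add, add_comm L C, inv_mul_cancel₀ hpos.ne']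
      · intro x y
        rw [← mul_sub, abs_mul, abs_of_pos (inv_pos.2 hpos), mul_assoc]
        exact mul_le_mul_of_nonneg_left (hLip x y) (inv_pos.2 hpos).le
      · intro x
        rw [abs_mul, abs_of_pos (inv_pos.2 hpos)]
        exact mul_le_mul_of_nonneg_left (hb x) (inv_pos.2 hpos).le
    rw [integral_const_mul, integral_const_mul, ← mul_sub, abs_mul,
      abs_of_pos (inv_pos.2 hpos)] at hmem
    rwa [inv_mul_le_iff₀ hpos] at hmem

/-- An infimum is nonexpansive in the sup norm. -/
lemma abs_iInf_sub_iInf_le {ι : Type*} [Nonempty ι] {f g : ι → ℝ} {C B : ℝ}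
    (hf : ∀ i, |f i| ≤ B) (hg : ∀ i, |g i| ≤ B) (h : ∀ i, |f i - g i| ≤ C) :
    |(⨅ i, f i) - ⨅ i, g i| ≤ C := by
  have bf : BddBelow (Set.range f) := ⟨-B, by rintro _ ⟨i, rfl⟩; exact (abs_le.1 (hf i)).1⟩
  have bg : BddBelow (Set.range g) := ⟨-B, by rintro _ ⟨i, rfl⟩; exact (abs_le.1 (hg i)).1⟩
  have h1 : (⨅ i, f i) - C ≤ ⨅ i, g i :=
    le_ciInf fun i => by linarith [ciInf_le bf i, (abs_le.1 (h i)).2]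
  have h2 : (⨅ i, g i) - C ≤ ⨅ i, f i :=
    le_ciInf fun i => by linarith [ciInf_le bg i, (abs_le.1 (h i)).1]
  exact abs_le.2 ⟨by linarith, by linarith⟩

/-- The function `u` is bounded by `M` and Lipschitz with constant `L`. -/
def BddLip {X : Type*} [PseudoMetricSpace X] (M L : ℝ) (u : X → ℝ) : Prop :=
  (∀ x, |u x| ≤ M) ∧ ∀ x y, |u x - u y| ≤ L * dist x y

lemma BddLip.continuous {X : Type*} [PseudoMetricSpace X] {M L : ℝ} {u : X → ℝ}
    (h : BddLip M L u) : Continuous u :=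
  (LipschitzWith.of_dist_le' (K := L) (by simpa [Real.dist_eq] using h.2)).continuous

/-- If `c` and `F` have Lipschitz constants `Lc` and `LF` in a variable `y`, then so does the
one-step cost `c + α u ∘ F`, with constant `Lc + α LF L`. -/
lemma BddLip.step {X Y : Type*} [PseudoMetricSpace X] [PseudoMetricSpace Y]
    {α Lc LF Mc M L : ℝ} (hα : 0 ≤ α) (hL : 0 ≤ L) {u : X → ℝ} (hu : BddLip M L u)
    {c : Y → ℝ} {F : Y → X} (hc : BddLip Mc Lc c)
    (hF : ∀ y₁ y₂, dist (F y₁) (F y₂) ≤ LF * dist y₁ y₂) :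
    BddLip (Mc + α * M) (Lc + α * LF * L) fun y => c y + α * u (F y) := by
  refine ⟨fun y => ?_, fun y₁ y₂ => ?_⟩
  · refine (abs_add_le _ _).trans (add_le_add (hc.1 y) ?_)
    rw [abs_mul, abs_of_nonneg hα]
    exact mul_le_mul_of_nonneg_left (hu.1 _) hα
  · have h1 : |u (F y₁) - u (F y₂)| ≤ L * (LF * dist y₁ y₂) :=
      (hu.2 _ _).trans (mul_le_mul_of_nonneg_left (hF _ _) hL)
    calc |c y₁ + α * u (F y₁) - (c y₂ + α * u (F y₂))|
        = |(c y₁ - c y₂) + α * (u (F y₁) - u (F y₂))| := by ring_nf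
      _ ≤ |c y₁ - c y₂| + α * |u (F y₁) - u (F y₂)| := by
          refine (abs_add_le _ _).trans_eq ?_
          rw [abs_mul, abs_of_nonneg hα]
      _ ≤ Lc * dist y₁ y₂ + α * (L * (LF * dist y₁ y₂)) :=
          add_le_add (hc.2 _ _) (mul_le_mul_of_nonneg_left h1 hα)
      _ = (Lc + α * LF * L) * dist y₁ y₂ := by ring

lemma BddLip.integrable {W : Type*} [PseudoMetricSpace W] [MeasurableSpace W]
    [OpensMeasurableSpace W] (μ : Measure W) [IsFiniteMeasure μ] {M L : ℝ} {f : W → ℝ}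
    (h : BddLip M L f) : Integrable f μ :=
  Integrable.of_bound h.continuous.measurable.aestronglyMeasurable M
    (Eventually.of_forall h.1)

/-! ### The constants and the closed form of the error recursion -/

/-- The sup bound `M_s` of the `s`-th Bellman iterate. -/
def supBound (α Mc Mv : ℝ) (s : ℕ) : ℝ := Mc * ∑ k ∈ Finset.range s, α ^ k + α ^ s * Mv

/-- The Lipschitz constant `ℓ_s` of the `s`-th Bellman iterate. -/
def lipBound (α Lc LF Lv : ℝ) (s : ℕ) : ℝ :=
  Lc * ∑ k ∈ Finset.range s, (α * LF) ^ k + (α * LF) ^ s * Lv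

/-- The error bound `D_t` (in units of `β(μ_true, μ)`), defined by its one-step recursion. -/
def errBound (α Lc LF Mc Mv Lv : ℝ) : ℕ → ℝ
  | 0 => 0
  | s + 1 => (Mc + α * supBound α Mc Mv s) + (Lc + α * LF * lipBound α Lc LF Lv s)
      + α * errBound α Lc LF Mc Mv Lv s

lemma supBound_succ (α Mc Mv : ℝ) (s : ℕ) :
    supBound α Mc Mv (s + 1) = Mc + α * supBound α Mc Mv s := by
  simp only [supBound, geom_sum_succ]; ring

lemma lipBound_succ (α Lc LF Lv : ℝ) (s : ℕ) :
    lipBound α Lc LF Lv (s + 1) = Lc + α * LF * lipBound α Lc LF Lv s := by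
  simp only [lipBound, geom_sum_succ]; ring

/-- The `Mc`, `Lc LF` and `Lv LF` sums of `Diff₂` can each be written in terms of a convolution
`∑_{j=1}^t α^{j-1} b_{t-j}`; this is the one-step recursion of such a convolution. -/
lemma sum_Icc_conv_succ (α : ℝ) (b : ℕ → ℝ) (n : ℕ) :
    ∑ j ∈ Finset.Icc 1 (n + 1), α ^ (j - 1) * b (n + 1 - j)
      = b n + α * ∑ j ∈ Finset.Icc 1 n, α ^ (j - 1) * b (n - j) := by
  have key : ∀ m, ∑ j ∈ Finset.Icc 1 m, α ^ (j - 1) * b (m - j)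
      = ∑ i ∈ Finset.range m, α ^ i * b (m - (i + 1)) := by
    intro m
    rw [← Finset.Ico_add_one_right_eq_Icc, Finset.sum_Ico_eq_sum_range]
    exact Finset.sum_congr (by simp) fun i _ => by rw [add_comm 1 i, Nat.add_sub_cancel]
  rw [key, key, Finset.sum_range_succ', Finset.mul_sum, add_comm]
  congr 1
  · simp
  · refine Finset.sum_congr rfl fun i _ => ?_
    rw [show n + 1 - (i + 1 + 1) = n - (i + 1) by omega]
    ring

/-- In the `Mc` double sum of `Diff₂` the term `j = n + 1` may be added, since its inner sum is
empty. -/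
lemma sum_Icc_Mc_eq (α : ℝ) (n : ℕ) :
    ∑ j ∈ Finset.Icc 1 n, α ^ j * ∑ k ∈ Finset.range (n + 1 - j), α ^ k
      = α * ∑ j ∈ Finset.Icc 1 (n + 1), α ^ (j - 1) * ∑ k ∈ Finset.range (n + 1 - j), α ^ k := by
  rw [Finset.sum_Icc_succ_top (by omega)]
  simp only [Nat.sub_self, Finset.range_zero, Finset.sum_empty, mul_zero, add_zero]
  rw [Finset.mul_sum]
  refine Finset.sum_congr rfl fun j hj => ?_
  obtain ⟨i, rfl⟩ := Nat.exists_eq_add_of_le' (Finset.mem_Icc.1 hj).1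
  rw [Nat.add_sub_cancel]; ring

/-- Reversal `j ↦ n + 1 - j` in the `Lv` sum of `Diff₂`; the term `α ^ n` is the one that `Diff₂`
lists separately. -/
lemma sum_Icc_Lv_eq (α r : ℝ) (n : ℕ) :
    α ^ n + ∑ j ∈ Finset.Icc 1 n, r ^ j * α ^ (n + 1 - j - 1)
      = ∑ j ∈ Finset.Icc 1 (n + 1), α ^ (j - 1) * r ^ (n + 1 - j) := by
  have h1 : ∑ j ∈ Finset.Icc 1 (n + 1), α ^ (j - 1) * r ^ (n + 1 - j)
      = ∑ i ∈ Finset.range (n + 1), α ^ i * r ^ (n - i) := by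
    rw [← Finset.Ico_add_one_right_eq_Icc, Finset.sum_Ico_eq_sum_range]
    refine Finset.sum_congr (by simp) fun i _ => ?_
    rw [show 1 + i - 1 = i by omega, show n + 1 - (1 + i) = n - i by omega]
  have h2 : ∑ j ∈ Finset.Icc 1 n, r ^ j * α ^ (n + 1 - j - 1)
      = ∑ i ∈ Finset.range n, r ^ (i + 1) * α ^ (n - (i + 1)) := by
    rw [← Finset.Ico_add_one_right_eq_Icc, Finset.sum_Ico_eq_sum_range]
    refine Finset.sum_congr (by simp) fun i _ => ?_
    rw [show n + 1 - (1 + i) - 1 = n - (i + 1) by omega, add_comm 1 i]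
  rw [h1, h2, ← Finset.sum_range_reflect (fun i => α ^ i * r ^ (n - i)) (n + 1),
    Finset.sum_range_succ', add_comm]
  congr 1
  · refine Finset.sum_congr rfl fun i hi => ?_
    have := Finset.mem_range.1 hi
    rw [show n + 1 - 1 - (i + 1) = n - (i + 1) by omega, show n - (n - (i + 1)) = i + 1 by omega]
    ring
  · simp

lemma errBound_eq_Diff2 (α Lc LF Mc Mv Lv : ℝ) (n : ℕ) :
    errBound α Lc LF Mc Mv Lv (n + 1) = Diff2 α Lc LF Mc Mv Lv (n + 1) := by
  -- The closed form below agrees with `Diff2` only from `t = 1` on, but satisfies the recursion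
  -- from `t = 0`.
  have closed : ∀ t : ℕ, errBound α Lc LF Mc Mv Lv t =
      (Mc + Lc) * ∑ k ∈ Finset.range t, α ^ k + t * α ^ t * Mv
      + Mc * (α * ∑ j ∈ Finset.Icc 1 t, α ^ (j - 1) * ∑ k ∈ Finset.range (t - j), α ^ k)
      + α * Lc * LF *
        ∑ j ∈ Finset.Icc 1 t, α ^ (j - 1) * ∑ k ∈ Finset.range (t - j), (α * LF) ^ k
      + α * Lv * LF * ∑ j ∈ Finset.Icc 1 t, α ^ (j - 1) * (α * LF) ^ (t - j) := by
    intro t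
    induction t with
    | zero => simp [errBound]
    | succ t ih =>
      rw [sum_Icc_conv_succ α (fun m => ∑ k ∈ Finset.range m, α ^ k),
        sum_Icc_conv_succ α (fun m => ∑ k ∈ Finset.range m, (α * LF) ^ k),
        sum_Icc_conv_succ α (fun m => (α * LF) ^ m), geom_sum_succ, errBound, ih, supBound,
        lipBound]
      push_cast
      ring
  rw [closed, Diff2, Nat.add_sub_cancel, sum_Icc_Mc_eq, ← sum_Icc_Lv_eq]
  push_cast
  ring

/-! ### Comparison of the two Bellman operators -/

/-- Lemma C.6: the Q-operators and Bellman iterates built from `μ_true` and from `μ` differ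
by at most `Diff₂(t,v)·β(μ_true, μ)`. -/
theorem stmt_12 {X 𝔸 W : Type*}
    [MetricSpace X] [TopologicalSpace.SeparableSpace X] [MeasurableSpace X] [BorelSpace X]
    [MetricSpace 𝔸] [TopologicalSpace.SeparableSpace 𝔸] [MeasurableSpace 𝔸] [BorelSpace 𝔸]
    [CompactSpace 𝔸] [Nonempty 𝔸]
    [MetricSpace W] [TopologicalSpace.SeparableSpace W] [MeasurableSpace W] [BorelSpace W]
    (μ : Measure W) [IsProbabilityMeasure μ]
    (μtrue : Measure W) [IsProbabilityMeasure μtrue]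
    (c : X → 𝔸 → W → ℝ)
    (hccont : Continuous (fun p : X × 𝔸 × W => c p.1 p.2.1 p.2.2))
    (Mc : ℝ) (hcbd : ∀ x a z, c x a z ≤ Mc) (hcnn : ∀ x a z, 0 ≤ c x a z)
    (F : X → 𝔸 → W → X)
    (hFcont : Continuous (fun p : X × 𝔸 × W => F p.1 p.2.1 p.2.2))
    (α : ℝ) (hα0 : 0 < α) (hα1 : α < 1)
    (Lc LF : ℝ) (hLc : 0 ≤ Lc) (hLF : 0 ≤ LF) (hαLF : α * LF < 1)
    (hcLipX : ∀ a z x₁ x₂, |c x₁ a z - c x₂ a z| ≤ Lc * dist x₁ x₂)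
    (hcLipW : ∀ x a z₁ z₂, |c x a z₁ - c x a z₂| ≤ Lc * dist z₁ z₂)
    (hFLipX : ∀ a z x₁ x₂, dist (F x₁ a z) (F x₂ a z) ≤ LF * dist x₁ x₂)
    (hFLipW : ∀ x a z₁ z₂, dist (F x a z₁) (F x a z₂) ≤ LF * dist z₁ z₂)
    (v : X → ℝ) (Lv : ℝ) (hLv : 0 ≤ Lv)
    (Mv : ℝ) (hvbd : ∀ x, |v x| ≤ Mv)
    (hvLip : ∀ x₁ x₂, |v x₁ - v x₂| ≤ Lv * dist x₁ x₂)
    (t : ℕ) (ht : 1 ≤ t) :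
    (∀ (x : X) (a : 𝔸),
      |Qop F c α μtrue t v x a - Qop F c α μ t v x a| ≤
        Diff2 α Lc LF Mc Mv Lv t * betaDist μtrue μ) ∧
    (∀ x : X,
      |(bellmanPhi F c α μtrue)^[t] v x - (bellmanPhi F c α μ)^[t] v x| ≤
        Diff2 α Lc LF Mc Mv Lv t * betaDist μtrue μ) := by
  obtain ⟨z₀⟩ : Nonempty W := nonempty_of_isProbabilityMeasure μ
  have hcX : ∀ a z, BddLip Mc Lc fun x => c x a z := fun a z =>
    ⟨fun x => abs_le.2 ⟨by linarith [hcnn x a z, hcbd x a z], hcbd x a z⟩, hcLipX a z⟩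
  have hcW : ∀ x a, BddLip Mc Lc fun z => c x a z := fun x a =>
    ⟨fun z => abs_le.2 ⟨by linarith [hcnn x a z, hcbd x a z], hcbd x a z⟩, hcLipW x a⟩
  have hlip : ∀ s, 0 ≤ lipBound α Lc LF Lv s := fun s => by
    unfold lipBound; positivity
  have hiter : ∀ (ν : Measure W) [IsProbabilityMeasure ν] (s : ℕ),
      BddLip (supBound α Mc Mv s) (lipBound α Lc LF Lv s) ((bellmanPhi F c α ν)^[s] v) := by
    intro ν _ s
    induction s with
    | zero => exact ⟨by simpa [supBound] using hvbd, by simpa [lipBound] using hvLip⟩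
    | succ s ih =>
      rw [Function.iterate_succ_apply', supBound_succ, lipBound_succ]
      set u := (bellmanPhi F c α ν)^[s] v
      have hQ : ∀ x a, |∫ z, (c x a z + α * u (F x a z)) ∂ν| ≤ Mc + α * supBound α Mc Mv s :=
        fun x a => abs_integral_le_of_abs_le ν
          (ih.step hα0.le (hlip s) (hcW x a) (hFLipW x a)).1
      refine ⟨fun x => ?_, fun x y => abs_iInf_sub_iInf_le (hQ x) (hQ y) fun a => ?_⟩
      · have hM := (abs_nonneg _).trans (hQ x (Classical.arbitrary 𝔸))
        have := abs_iInf_sub_iInf_le (g := fun _ : 𝔸 => (0 : ℝ)) (hQ x)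
          (fun _ => by simpa using hM) (fun a => by simpa using hQ x a)
        simpa [bellmanPhi] using this
      · rw [← integral_sub
          ((ih.step hα0.le (hlip s) (hcW x a) (hFLipW x a)).integrable ν)
          ((ih.step hα0.le (hlip s) (hcW y a) (hFLipW y a)).integrable ν)]
        exact abs_integral_le_of_abs_le ν fun z =>
          (ih.step hα0.le (hlip s) (hcX a z) (hFLipX a z)).2 x y
  -- One step of the comparison: the error of the iterates at step `s` controls that of the
  -- `Q`-functions at step `s + 1`.
  have hQstep : ∀ s, (∀ x, |(bellmanPhi F c α μtrue)^[s] v x - (bellmanPhi F c α μ)^[s] v x| ≤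
      errBound α Lc LF Mc Mv Lv s * betaDist μtrue μ) → ∀ x a,
      |Qop F c α μtrue (s + 1) v x a - Qop F c α μ (s + 1) v x a| ≤
        errBound α Lc LF Mc Mv Lv (s + 1) * betaDist μtrue μ := by
    intro s hs x a
    simp only [Qop, Nat.add_sub_cancel]
    have hT := (hiter μtrue s).step hα0.le (hlip s) (hcW x a) (hFLipW x a)
    have hU := (hiter μ s).step hα0.le (hlip s) (hcW x a) (hFLipW x a)
    have hlip' : 0 ≤ Lc + α * LF * lipBound α Lc LF Lv s := by
      have := hlip s
      positivity
    have h1 := abs_integral_sub_le_betaDist μtrue μ hU.continuous.measurable hlip'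
      ((abs_nonneg _).trans (hU.1 z₀)) hU.2 hU.1
    have h2 : |∫ z, (c x a z + α * (bellmanPhi F c α μtrue)^[s] v (F x a z)) ∂μtrue
        - ∫ z, (c x a z + α * (bellmanPhi F c α μ)^[s] v (F x a z)) ∂μtrue|
        ≤ α * (errBound α Lc LF Mc Mv Lv s * betaDist μtrue μ) := by
      rw [← integral_sub (hT.integrable μtrue) (hU.integrable μtrue)]
      refine abs_integral_le_of_abs_le μtrue fun z => ?_
      rw [add_sub_add_left_eq_sub, ← mul_sub, abs_mul, abs_of_pos hα0]
      exact mul_le_mul_of_nonneg_left (hs _) hα0.le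
    refine (abs_sub_le _ _ _).trans ((add_le_add h2 h1).trans_eq ?_)
    rw [errBound]
    ring
  have herr : ∀ s x, |(bellmanPhi F c α μtrue)^[s] v x - (bellmanPhi F c α μ)^[s] v x| ≤
      errBound α Lc LF Mc Mv Lv s * betaDist μtrue μ := by
    intro s
    induction s with
    | zero => intro x; simp [errBound]
    | succ s ih =>
      intro x
      rw [Function.iterate_succ_apply', Function.iterate_succ_apply']
      exact abs_iInf_sub_iInf_le
        (fun a => abs_integral_le_of_abs_le μtrue
          ((hiter μtrue s).step hα0.le (hlip s) (hcW x a) (hFLipW x a)).1)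
        (fun a => abs_integral_le_of_abs_le μ
          ((hiter μ s).step hα0.le (hlip s) (hcW x a) (hFLipW x a)).1)
        (hQstep s ih x)
  obtain ⟨n, rfl⟩ := Nat.exists_eq_add_of_le' ht
  rw [← errBound_eq_Diff2]
  exact ⟨hQstep n (herr n), herr (n + 1)⟩
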